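/- Let ℓ′ ≥ 1, γ′ = (γ′_1,…,γ′_{ℓ′}) ∈ (ℕ*)^{ℓ′}, and n ≥ ℓ′. Let σ_n be a conjugation-invariant random permutation of {1,…,n} and A^{γ′} := {σ ∈ S_n : c_j(σ) = γ′_j for all 1 ≤ j ≤ ℓ′, and the points 1,…,ℓ′ lie in pairwise distinct cycles of σ}. Then (n!/(n−ℓ′)!) · P(σ_n ∈ A^{γ′}) ≤ E( ∏_{i=1}^{ℓ′} γ′_i · #_{γ′_i}(σ_n) ). -/

import Mathlib

/-! By conjugation invariance, the probability of `A^{γ'}` is unchanged when the base points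
`1, …, ℓ'` are replaced by the images of an arbitrary embedding `f : Fin ℓ' ↪ Fin n`, and there are
`n!/(n-ℓ')!` such embeddings. Hence the left-hand side is the expected number of embeddings `f` for
which `f 1, …, f ℓ'` lie in distinct cycles of `σ` of respective lengths `γ'_1, …, γ'_ℓ'`
(`aSet`, `prob_aSet`). Forgetting distinctness, this number is at most the number of functions `f`
with `cycLen σ (f i) = γ'_i` for all `i` (`card_embedding_le`), that is, the product over `i` of the
number of points in cycles of length `γ'_i`, each of which equals `γ'_i · #_{γ'_i}(σ)`
(`mul_cycCount`). -/

noncomputable section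

/-- Length of the cycle of `σ` containing the point `x`. -/
def cycLen {n : ℕ} (σ : Equiv.Perm (Fin n)) (x : Fin n) : ℕ :=
  Function.minimalPeriod σ x

/-- `#_ℓ(σ)`: the number of cycles of length `ℓ` of `σ`
(fixed points counting as cycles of length 1). -/
def cycCount {n : ℕ} (σ : Equiv.Perm (Fin n)) (ℓ : ℕ) : ℕ :=
  (Finset.univ.filter fun x => cycLen σ x = ℓ).card / ℓ

/-- Probability of a set under a discrete distribution. -/
def prob {α : Type*} [Fintype α] (p : α → ℝ) (S : Set α) : ℝ :=
  ∑ x, S.indicator p x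

lemma cycLen_eq_of_sameCycle {n : ℕ} {σ : Equiv.Perm (Fin n)} {x y : Fin n}
    (h : σ.SameCycle x y) : cycLen σ y = cycLen σ x := by
  obtain ⟨i, -, rfl⟩ := h.exists_pow_eq'
  unfold cycLen
  rw [← Equiv.Perm.iterate_eq_pow]
  exact Function.minimalPeriod_apply_iterate
    (Function.Injective.mem_periodicPts σ.injective x) i

lemma card_sameCycle {n : ℕ} (σ : Equiv.Perm (Fin n)) (x : Fin n) :
    (Finset.univ.filter fun y => σ.SameCycle x y).card = cycLen σ x := by
  have hx : x ∈ Function.periodicPts σ := Function.Injective.mem_periodicPts σ.injective x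
  have h : (Finset.univ.filter fun y => σ.SameCycle x y) =
      (Finset.range (cycLen σ x)).image fun k => σ^[k] x := by
    ext y
    simp only [Finset.mem_filter, Finset.mem_univ, true_and, Finset.mem_image, Finset.mem_range]
    constructor
    · intro h
      obtain ⟨i, -, rfl⟩ := h.exists_pow_eq'
      refine ⟨i % cycLen σ x, Nat.mod_lt _ (Function.minimalPeriod_pos_of_mem_periodicPts hx), ?_⟩
      unfold cycLen
      rw [Function.iterate_mod_minimalPeriod_eq, Equiv.Perm.iterate_eq_pow]
    · rintro ⟨k, -, rfl⟩
      exact ⟨k, by rw [zpow_natCast, Equiv.Perm.iterate_eq_pow]⟩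
  rw [h, Finset.card_image_of_injOn, Finset.card_range]
  intro a ha b hb hab
  exact Function.iterate_injOn_Iio_minimalPeriod (Finset.mem_range.1 (Finset.mem_coe.1 ha))
    (Finset.mem_range.1 (Finset.mem_coe.1 hb)) hab

/-- The points lying in cycles of length `ℓ` split into whole cycles, each with `ℓ` points, so the
natural-number division in `cycCount` is exact. -/
lemma mul_cycCount {n : ℕ} (σ : Equiv.Perm (Fin n)) (ℓ : ℕ) :
    ℓ * cycCount σ ℓ = (Finset.univ.filter fun x => cycLen σ x = ℓ).card := by
  classical
  refine Nat.mul_div_cancel' ?_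
  let r := Equiv.Perm.SameCycle.setoid σ
  rw [Finset.card_eq_sum_card_image (fun x => (Quotient.mk r x))]
  refine Finset.dvd_sum fun q hq => ?_
  obtain ⟨x, hx, rfl⟩ := Finset.mem_image.1 hq
  have hx' : cycLen σ x = ℓ := (Finset.mem_filter.1 hx).2
  refine dvd_of_eq ?_
  rw [← hx', ← card_sameCycle σ x]
  congr 1
  ext y
  simp only [Finset.mem_filter, Finset.mem_univ, true_and, card_sameCycle]
  constructor
  · intro h
    exact ⟨cycLen_eq_of_sameCycle h, Quotient.sound (s := r) h.symm⟩
  · rintro ⟨-, h⟩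
    exact (Quotient.exact (s := r) h).symm

/-- The permutations `σ` for which the points `f j` lie in pairwise distinct cycles, of respective
lengths `γ j`. The set `A^{γ'}` is the case where `f` lists the first `ℓ'` points. -/
def aSet {n m : ℕ} (γ : Fin m → ℕ) (f : Fin m → Fin n) : Set (Equiv.Perm (Fin n)) :=
  {σ | (∀ j, cycLen σ (f j) = γ j) ∧ ∀ j j', j ≠ j' → ¬ σ.SameCycle (f j) (f j')}

lemma cycLen_conj {n : ℕ} (τ σ : Equiv.Perm (Fin n)) (x : Fin n) :
    cycLen (τ⁻¹ * σ * τ) x = cycLen σ (τ x) := by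
  unfold cycLen
  rw [Function.minimalPeriod_eq_minimalPeriod_iff]
  intro k
  have h : (τ⁻¹ * σ * τ) ^ k = τ⁻¹ * σ ^ k * τ := by
    simpa using conj_pow (i := k) (a := τ⁻¹) (b := σ)
  simp only [Function.IsPeriodicPt, Function.IsFixedPt, Equiv.Perm.iterate_eq_pow, h,
    Equiv.Perm.mul_apply]
  exact Equiv.Perm.inv_eq_iff_eq.trans eq_comm |>.trans eq_comm

lemma conj_mem_aSet {n m : ℕ} (γ : Fin m → ℕ) (f : Fin m → Fin n) (τ σ : Equiv.Perm (Fin n)) :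
    τ⁻¹ * σ * τ ∈ aSet γ f ↔ σ ∈ aSet γ (τ ∘ f) := by
  have h (x y : Fin n) : (τ⁻¹ * σ * τ).SameCycle x y ↔ σ.SameCycle (τ x) (τ y) := by
    simpa using Equiv.Perm.sameCycle_conj (f := σ) (g := τ⁻¹) (x := x) (y := y)
  simp [aSet, cycLen_conj, h]

/-- Conjugation invariance and the transitivity of `S_n` on injective tuples: the probability of
`aSet γ f` does not depend on the embedding `f`. -/
lemma prob_aSet {n m : ℕ} (γ : Fin m → ℕ) (p : Equiv.Perm (Fin n) → ℝ)
    (hconj : ∀ τ σ : Equiv.Perm (Fin n), p (τ⁻¹ * σ * τ) = p σ) (f g : Fin m ↪ Fin n) :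
    prob p (aSet γ f) = prob p (aSet γ g) := by
  classical
  obtain ⟨τ, hτ⟩ : ∃ τ : Equiv.Perm (Fin n), τ ∘ f = g := by
    let e : {x // x ∈ Set.range f} ≃ {x // x ∈ Set.range g} :=
      (Equiv.ofInjective f f.injective).symm.trans (Equiv.ofInjective g g.injective)
    refine ⟨e.extendSubtype, ?_⟩
    funext j
    rw [Function.comp_apply, Equiv.extendSubtype_apply_of_mem e (f j) ⟨j, rfl⟩]
    simp [e]
  unfold prob
  refine (Fintype.sum_equiv (MulAut.conj τ⁻¹).toEquiv _ _ fun σ => ?_).symm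
  have hσ : (MulAut.conj τ⁻¹).toEquiv σ = τ⁻¹ * σ * τ := by simp
  simp only [hσ, Set.indicator_apply, conj_mem_aSet, hτ, hconj]

lemma card_embedding_le {n m : ℕ} (γ : Fin m → ℕ) (σ : Equiv.Perm (Fin n))
    [DecidablePred fun f : Fin m ↪ Fin n => σ ∈ aSet γ f] :
    (Finset.univ.filter fun f : Fin m ↪ Fin n => σ ∈ aSet γ f).card ≤
      ∏ i, γ i * cycCount σ (γ i) := by
  simp only [mul_cycCount]
  rw [← Fintype.card_piFinset]
  refine Finset.card_le_card_of_injOn (fun f => ⇑f) ?_ DFunLike.coe_injective.injOn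
  intro f hf
  simpa using (Finset.mem_filter.1 hf).2.1

/-- For a conjugation-invariant random permutation `σ_n` of `{1,…,n}` and
`A^{γ'}` as above: `(n!/(n-ℓ')!)·P(σ_n ∈ A^{γ'}) ≤ E(∏_i γ'_i·#_{γ'_i}(σ_n))`. -/
theorem Aset_probability_moment_bound
    {n ℓ' : ℕ} (hℓ' : 1 ≤ ℓ')
    (γ' : Fin ℓ' → ℕ) (hγ' : ∀ i, 1 ≤ γ' i) (hℓ'n : ℓ' ≤ n)
    (p : Equiv.Perm (Fin n) → ℝ)
    (hpos : ∀ σ, 0 ≤ p σ) (hsum : ∑ σ, p σ = 1)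
    (hconj : ∀ τ σ : Equiv.Perm (Fin n), p (τ⁻¹ * σ * τ) = p σ) :
    ((n.factorial : ℝ) / ((n - ℓ').factorial : ℝ)) *
        prob p {σ | (∀ j : Fin ℓ', cycLen σ (Fin.castLE hℓ'n j) = γ' j) ∧
          ∀ j j' : Fin ℓ', j ≠ j' →
            ¬ σ.SameCycle (Fin.castLE hℓ'n j) (Fin.castLE hℓ'n j')}
      ≤ ∑ σ, p σ * ∏ i, ((γ' i : ℝ) * (cycCount σ (γ' i) : ℝ)) := by
  classical
  have hcard : ((n.factorial : ℝ) / ((n - ℓ').factorial : ℝ)) =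
      ((Finset.univ : Finset (Fin ℓ' ↪ Fin n)).card : ℝ) := by
    rw [Finset.card_univ, Fintype.card_embedding_eq, Fintype.card_fin, Fintype.card_fin,
      Nat.descFactorial_eq_div hℓ'n,
      Nat.cast_div (Nat.factorial_dvd_factorial (Nat.sub_le n ℓ')) (by positivity)]
  change _ * prob p (aSet γ' (Fin.castLEEmb hℓ'n)) ≤ _
  calc _ = ∑ f : Fin ℓ' ↪ Fin n, prob p (aSet γ' f) := by
        rw [hcard, Finset.sum_congr rfl fun f _ =>
          prob_aSet γ' p hconj f (Fin.castLEEmb hℓ'n), Finset.sum_const, nsmul_eq_mul]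
    _ = ∑ σ, p σ * ((Finset.univ.filter fun f : Fin ℓ' ↪ Fin n => σ ∈ aSet γ' f).card : ℝ) := by
        unfold prob
        rw [Finset.sum_comm]
        refine Finset.sum_congr rfl fun σ _ => ?_
        simp only [Set.indicator_apply]
        rw [← Finset.sum_filter, Finset.sum_const, nsmul_eq_mul, mul_comm]
    _ ≤ _ := by
        refine Finset.sum_le_sum fun σ _ => mul_le_mul_of_nonneg_left ?_ (hpos σ)
        exact_mod_cast card_embedding_le γ' σ
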